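/- Let G be a connected labeled Hamiltonian graph on vertex set [n], i.e., the cycle C_n (with edges {1,n} and {i,i+1} for i=1,...,n-1) is a subgraph of G. Then the only minimal prime ideal of the Hankel edge ideal I_G is the ideal I_X of 2-minors of the 2×n Hankel matrix; in particular, height I_G = n-1. -/

import Mathlib

open MvPolynomial

/-- The Hankel binomial `g_{ij} = x_i x_{j+1} - x_j x_{i+1}` (0-indexed vertices). -/
noncomputable def hg (n : ℕ) (K : Type*) [Field K] (i j : Fin n) :
    MvPolynomial (Fin (n + 1)) K :=
  X i.castSucc * X j.succ - X j.castSucc * X i.succ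

/-- The generating set of the Hankel edge ideal of a graph `G` on `[n]`. -/
noncomputable def hgenSet (n : ℕ) (K : Type*) [Field K] (G : SimpleGraph (Fin n)) :
    Set (MvPolynomial (Fin (n + 1)) K) :=
  { f | ∃ i j : Fin n, i < j ∧ G.Adj i j ∧ f = hg n K i j }

/-- The Hankel edge ideal `I_G`. -/
noncomputable def hankelIdeal (n : ℕ) (K : Type*) [Field K] (G : SimpleGraph (Fin n)) :
    Ideal (MvPolynomial (Fin (n + 1)) K) :=
  Ideal.span (hgenSet n K G)

/-- `I_X`, the ideal of 2-minors of the 2×n Hankel matrix, i.e. `I_{K_n}`. -/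
noncomputable def IX (n : ℕ) (K : Type*) [Field K] :
    Ideal (MvPolynomial (Fin (n + 1)) K) :=
  hankelIdeal n K ⊤

/-- The height of an ideal: the infimum of the heights of primes containing it. -/
noncomputable def ht {R : Type*} [CommRing R] (I : Ideal R) : ℕ∞ :=
  ⨅ (p : PrimeSpectrum R) (_ : I ≤ p.asIdeal), Order.height p

/-- The minimal number of generators of an ideal. -/
noncomputable def mu {R : Type*} [CommRing R] (I : Ideal R) : ℕ∞ :=
  ⨅ (s : Finset R) (_ : Ideal.span (s : Set R) = I), (s.card : ℕ∞)

/-- The arithmetical rank of an ideal. -/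
noncomputable def ara {R : Type*} [CommRing R] (I : Ideal R) : ℕ∞ :=
  ⨅ (s : Finset R) (_ : (Ideal.span (s : Set R)).radical = I.radical), (s.card : ℕ∞)

/-- The labeled path `L_n` with edges `{i, i+1}` (0-indexed). -/
def pathG (n : ℕ) : SimpleGraph (Fin n) :=
  SimpleGraph.fromRel (fun i j => (i : ℕ) + 1 = (j : ℕ))

/-- The labeled cycle `C_n` with edges `{i, i+1}` and `{0, n-1}` (0-indexed). -/
def cycleG (n : ℕ) : SimpleGraph (Fin n) :=
  SimpleGraph.fromRel (fun i j =>
    (i : ℕ) + 1 = (j : ℕ) ∨ ((i : ℕ) = 0 ∧ (j : ℕ) = n - 1))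

/-- The monomial prime ideal generated by the variables with index in `[lo, hi]` (0-indexed). -/
noncomputable def Pvars (n : ℕ) (K : Type*) [Field K] (lo hi : ℕ) :
    Ideal (MvPolynomial (Fin (n + 1)) K) :=
  Ideal.span { f | ∃ i : Fin (n + 1), lo ≤ (i : ℕ) ∧ (i : ℕ) ≤ hi ∧ f = X i }


lemma dom_rel_ne {D : Type*} [CommRing D] [IsDomain D] (n : ℕ) (y : ℕ → D)
    (h : ∀ i, i + 2 ≤ n → y i * y (i + 2) = y (i + 1) * y (i + 1))
    (h0 : y 0 ≠ 0) (h1 : y 1 ≠ 0) :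
    ∀ i j, i < n → j < n → y i * y (j + 1) = y j * y (i + 1) := by
  have key : ∀ i, i < n → y 0 * y (i + 1) = y 1 * y i ∧ y i ≠ 0 := by
    intro i
    induction i with
    | zero => intro _; exact ⟨by ring, h0⟩
    | succ i ih =>
      intro hi
      obtain ⟨e, ne⟩ := ih (by omega)
      have ne' : y (i + 1) ≠ 0 := by
        intro hz
        rw [hz, mul_zero] at e
        exact mul_ne_zero h1 ne e.symm
      refine ⟨?_, ne'⟩
      apply mul_left_cancel₀ ne
      have := h i (by omega)
      linear_combination y 0 * this + y (i + 1) * e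
  intro i j hi hj
  apply mul_left_cancel₀ h0
  linear_combination y i * (key j hj).1 - y j * (key i hi).1

lemma dom_rel {D : Type*} [CommRing D] [IsDomain D] (n : ℕ) (y : ℕ → D)
    (h : ∀ i, i + 2 ≤ n → y i * y (i + 2) = y (i + 1) * y (i + 1))
    (hc : y 0 * y n = y (n - 1) * y 1) :
    ∀ i j, i < j → j < n → y i * y (j + 1) = y j * y (i + 1) := by
  by_cases h1 : y 1 = 0
  · have z : ∀ i, i + 1 < n → y (i + 1) = 0 := by
      intro i
      induction i with
      | zero => intro _; exact h1
      | succ i ih =>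
        intro hi
        have := h (i + 1) (by omega)
        rw [ih (by omega), zero_mul] at this
        exact mul_self_eq_zero.mp this.symm
    have z' : ∀ i, 0 < i → i < n → y i = 0 := by
      intro i h0 hi
      obtain ⟨k, rfl⟩ : ∃ k, i = k + 1 := ⟨i - 1, by omega⟩
      exact z k hi
    intro i j hij hj
    rw [z' j (by omega) hj, zero_mul]
    rcases Nat.eq_zero_or_pos i with rfl | hi
    · rcases Nat.lt_or_ge (j + 1) n with hj' | hj'
      · rw [z' (j + 1) (by omega) hj', mul_zero]
      · have : j + 1 = n := by omega
        rw [this, hc, h1, mul_zero]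
    · rw [z' i hi (by omega), zero_mul]
  · by_cases h0 : y 0 = 0
    · intro i j hij hj
      have := h 0 (by omega)
      rw [h0, zero_mul] at this
      exact absurd (mul_self_eq_zero.mp this.symm) h1
    · intro i j hij hj
      exact dom_rel_ne n y h h0 h1 i j (by omega) hj

lemma ring_rel {A : Type*} [CommRing A] (n : ℕ) (y : ℕ → A)
    (h : ∀ i j, i < n → j < n → y i * y (j + 1) = y j * y (i + 1)) (k : ℕ) :
    ∀ a b, a + k ≤ n → b + k ≤ n → y a * y (b + k) = y (a + k) * y b := by
  induction k with
  | zero => intro a b _ _; rfl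
  | succ k ih =>
    intro a b ha hb
    rw [← add_assoc, h a (b + k) (by omega) (by omega), mul_comm,
      ih (a + 1) b (by omega) (by omega)]
    congr 2; omega

/-- normal forms -/
def NFset {A : Type*} [CommRing A] (n : ℕ) (y : ℕ → A) : Set A :=
  {z | z = 1 ∨ ∃ q r p, r ≤ n ∧ z = y n ^ q * y r * y 0 ^ p}

lemma NF_mul {A : Type*} [CommRing A] (n : ℕ) (y : ℕ → A)
    (h : ∀ i j, i < n → j < n → y i * y (j + 1) = y j * y (i + 1)) (i : ℕ) (hi : i ≤ n)
    (z : A) (hz : z ∈ NFset n y) : y i * z ∈ NFset n y := by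
  rcases hz with rfl | ⟨q, r, p, hr, rfl⟩
  · exact Or.inr ⟨0, i, 0, hi, by ring⟩
  · right
    rcases le_total (i + r) n with hs | hs
    · refine ⟨q, i + r, p + 1, hs, ?_⟩
      have := ring_rel n y h r 0 i (by omega) (by omega)
      rw [zero_add] at this
      rw [pow_succ]
      linear_combination -(y n ^ q * y 0 ^ p) * this
    · refine ⟨q + 1, i + r - n, p, by omega, ?_⟩
      have := ring_rel n y h (n - r) (i + r - n) r (by omega) (by omega)
      rw [show r + (n - r) = n by omega, show i + r - n + (n - r) = i by omega] at this
      rw [pow_succ]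
      linear_combination -(y n ^ q * y 0 ^ p) * this

/-- variables indexed by naturals -/
noncomputable def yv (n : ℕ) (K : Type*) [Field K] (i : ℕ) : MvPolynomial (Fin (n + 1)) K :=
  if h : i < n + 1 then X ⟨i, h⟩ else 0

lemma yv_fin (n : ℕ) (K : Type*) [Field K] (i : Fin (n + 1)) : yv n K i = X i := by
  rw [yv, dif_pos i.2]

lemma yv_of_lt (n : ℕ) (K : Type*) [Field K] (i : ℕ) (h : i < n + 1) :
    yv n K i = X ⟨i, h⟩ := by
  simp [yv, h]

lemma hg_eq (n : ℕ) (K : Type*) [Field K] (i j : Fin n) :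
    hg n K i j = yv n K i * yv n K (j + 1) - yv n K j * yv n K (i + 1) := by
  simp only [hg, ← yv_fin, Fin.val_castSucc, Fin.val_succ]

lemma mem_iff_rel (n : ℕ) (K : Type*) [Field K] (Q : Ideal (MvPolynomial (Fin (n + 1)) K))
    (a b c d : ℕ) : yv n K a * yv n K b - yv n K c * yv n K d ∈ Q ↔
      Ideal.Quotient.mk Q (yv n K a) * Ideal.Quotient.mk Q (yv n K b) =
      Ideal.Quotient.mk Q (yv n K c) * Ideal.Quotient.mk Q (yv n K d) := by
  rw [← Ideal.Quotient.eq, map_mul, map_mul]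

lemma IX_le_iff (n : ℕ) (K : Type*) [Field K] (Q : Ideal (MvPolynomial (Fin (n + 1)) K)) :
    IX n K ≤ Q ↔ ∀ i j, i < j → j < n →
      Ideal.Quotient.mk Q (yv n K i) * Ideal.Quotient.mk Q (yv n K (j + 1)) =
      Ideal.Quotient.mk Q (yv n K j) * Ideal.Quotient.mk Q (yv n K (i + 1)) := by
  simp only [← mem_iff_rel]
  unfold IX hankelIdeal
  rw [Ideal.span_le]
  constructor
  · intro h i j hij hj
    have := h ⟨⟨i, by omega⟩, ⟨j, hj⟩, hij, by simp [Fin.ext_iff]; omega, rfl⟩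
    rwa [hg_eq] at this
  · rintro h f ⟨i, j, hij, -, rfl⟩
    rw [hg_eq]
    exact h i j hij j.2

lemma IX_rel (n : ℕ) (K : Type*) [Field K] (i j : ℕ) (hi : i < n) (hj : j < n) :
      Ideal.Quotient.mk (IX n K) (yv n K i) * Ideal.Quotient.mk (IX n K) (yv n K (j + 1)) =
      Ideal.Quotient.mk (IX n K) (yv n K j) * Ideal.Quotient.mk (IX n K) (yv n K (i + 1)) := by
  rcases lt_trichotomy i j with h | rfl | h
  · exact (IX_le_iff n K _).1 le_rfl i j h hj
  · rfl
  · exact ((IX_le_iff n K _).1 le_rfl j i h hi).symm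

lemma IX_le_prime (n : ℕ) (K : Type*) [Field K] (hn : 3 ≤ n)
    (G : SimpleGraph (Fin n)) (hcyc : cycleG n ≤ G)
    (Q : Ideal (MvPolynomial (Fin (n + 1)) K)) [Q.IsPrime] (hQ : hankelIdeal n K G ≤ Q) :
    IX n K ≤ Q := by
  rw [IX_le_iff]
  have e : ∀ i j : Fin n, i < j → G.Adj i j → hg n K i j ∈ Q := fun i j h1 h2 =>
    hQ (Ideal.subset_span ⟨i, j, h1, h2, rfl⟩)
  apply dom_rel n (fun i => Ideal.Quotient.mk Q (yv n K i))
  · intro i hi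
    have := e ⟨i, by omega⟩ ⟨i + 1, by omega⟩ (by simp [Fin.lt_def])
      (hcyc (by simp [cycleG, Fin.ext_iff]))
    rw [hg_eq] at this
    exact (mem_iff_rel ..).1 this
  · have := e ⟨0, by omega⟩ ⟨n - 1, by omega⟩ (by simp [Fin.lt_def]; omega)
      (hcyc (by simp [cycleG, Fin.ext_iff]; omega))
    rw [hg_eq, mem_iff_rel] at this
    simp only [show n - 1 + 1 = n by omega] at this
    exact this

/-- partial parametrization -/
noncomputable def Phi (n : ℕ) (K : Type*) [Field K] (k : ℕ) :
    MvPolynomial (Fin (n + 1)) K →ₐ[K] MvPolynomial (Fin (n + 1)) K :=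
  aeval (fun i => if (i : ℕ) ≤ k then yv n K 0 ^ (n - i) * yv n K 1 ^ (i : ℕ) else X i)

lemma Phi_yv_le (n : ℕ) (K : Type*) [Field K] (k i : ℕ) (hi : i ≤ n) (hk : i ≤ k) :
    Phi n K k (yv n K i) = yv n K 0 ^ (n - i) * yv n K 1 ^ i := by
  rw [yv_of_lt n K i (by omega)]
  simp [Phi, hk]

lemma Phi_yv_gt (n : ℕ) (K : Type*) [Field K] (k i : ℕ) (hi : i ≤ n) (hk : k < i) :
    Phi n K k (yv n K i) = yv n K i := by
  rw [yv_of_lt n K i (by omega)]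
  simp [Phi, hk]

lemma Phi_rel (n : ℕ) (K : Type*) [Field K] (k i j : ℕ) (hk : k ≤ n) (hi : i + 1 ≤ k)
    (hj : j + 1 ≤ k) :
    Phi n K k (yv n K i * yv n K (j + 1) - yv n K j * yv n K (i + 1)) = 0 := by
  rw [map_sub, map_mul, map_mul]
  rw [Phi_yv_le, Phi_yv_le, Phi_yv_le, Phi_yv_le] <;> try omega
  obtain ⟨a, ha⟩ : ∃ a, n = i + 1 + a := ⟨n - (i + 1), by omega⟩
  obtain ⟨b, hb⟩ : ∃ b, n = j + 1 + b := ⟨n - (j + 1), by omega⟩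
  rw [show n - i = a + 1 by omega, show n - j = b + 1 by omega, show n - (i + 1) = a by omega,
    show n - (j + 1) = b by omega]
  ring

lemma IX_le_ker (n : ℕ) (K : Type*) [Field K] : IX n K ≤ RingHom.ker (Phi n K n) := by
  rw [IX_le_iff]
  intro i j hij hj
  rw [← mem_iff_rel, RingHom.mem_ker]
  exact Phi_rel n K n i j le_rfl (by omega) (by omega)

lemma monomial_ind (n : ℕ) (K : Type*) [Field K] (T : MvPolynomial (Fin (n + 1)) K → Prop)
    (h1 : T 1) (hm : ∀ i p, i ≤ n → T p → T (yv n K i * p)) (m : Fin (n + 1) →₀ ℕ) :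
    T (monomial m 1) := by
  obtain ⟨s, rfl⟩ : ∃ s, m = Multiset.toFinsupp s := ⟨Finsupp.toMultiset m, by simp⟩
  induction s using Multiset.induction_on with
  | empty => simpa using h1
  | cons a s ih =>
    have := hm a _ (by omega) ih
    rw [yv_fin] at this
    rw [← Multiset.singleton_add, Multiset.toFinsupp_add, Multiset.toFinsupp_singleton]
    rw [X, monomial_mul, one_mul] at this
    exact this

lemma Phi_mon (n : ℕ) (K : Type*) [Field K] (hn : 1 ≤ n) (m : Fin (n + 1) →₀ ℕ) :
    ∃ u, Phi n K n (monomial m 1) = monomial u 1 := by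
  apply monomial_ind n K (fun p => ∃ u, Phi n K n p = monomial u 1)
  · exact ⟨0, by simp⟩
  · rintro i p hi ⟨u, hu⟩
    rw [map_mul, hu, Phi_yv_le n K n i hi hi, yv_of_lt n K 0 (by omega),
      yv_of_lt n K 1 (by omega), X_pow_eq_monomial, X_pow_eq_monomial, monomial_mul, monomial_mul]
    exact ⟨_, by rw [one_mul, one_mul]⟩

lemma mon_NF (n : ℕ) (K : Type*) [Field K] (m : Fin (n + 1) →₀ ℕ) :
    Ideal.Quotient.mk (IX n K) (monomial m 1) ∈
      NFset n (fun i => Ideal.Quotient.mk (IX n K) (yv n K i)) := by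
  apply monomial_ind n K (fun p => Ideal.Quotient.mk (IX n K) p ∈
      NFset n (fun i => Ideal.Quotient.mk (IX n K) (yv n K i)))
  · left; simp
  · intro i p hi hp
    rw [map_mul]
    exact NF_mul n (fun i => Ideal.Quotient.mk (IX n K) (yv n K i)) (IX_rel n K) i hi _ hp

lemma mono_inj (n : ℕ) (K : Type*) [Field K] (hn : 1 ≤ n) (a b c d : ℕ)
    (h : yv n K 0 ^ a * yv n K 1 ^ b = yv n K 0 ^ c * yv n K 1 ^ d) : a = c ∧ b = d := by
  rw [yv_of_lt n K 0 (by omega), yv_of_lt n K 1 (by omega), X_pow_eq_monomial, X_pow_eq_monomial,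
    X_pow_eq_monomial, X_pow_eq_monomial, monomial_mul, monomial_mul, one_mul,
    monomial_left_inj one_ne_zero] at h
  have h0 := DFunLike.congr_fun h ⟨0, by omega⟩
  have h1 := DFunLike.congr_fun h ⟨1, by omega⟩
  simp [Finsupp.single_apply] at h0 h1
  exact ⟨h0, h1⟩

lemma Phi_NF (n : ℕ) (K : Type*) [Field K] (q r p : ℕ) (hr : r ≤ n) :
    Phi n K n (yv n K n ^ q * yv n K r * yv n K 0 ^ p) =
      yv n K 0 ^ (n - r + n * p) * yv n K 1 ^ (n * q + r) := by
  rw [map_mul, map_mul, map_pow, map_pow, Phi_yv_le _ _ _ _ le_rfl le_rfl,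
    Phi_yv_le _ _ _ _ hr hr, Phi_yv_le _ _ _ 0 (by omega) (by omega)]
  rw [Nat.sub_self, Nat.sub_zero, pow_add, pow_add, pow_mul, pow_mul]
  ring

lemma Phi_of_mk (n : ℕ) (K : Type*) [Field K] (f g : MvPolynomial (Fin (n + 1)) K)
    (h : Ideal.Quotient.mk (IX n K) f = Ideal.Quotient.mk (IX n K) g) :
    Phi n K n f = Phi n K n g := by
  rw [Ideal.Quotient.eq] at h
  have := IX_le_ker n K h
  rwa [RingHom.mem_ker, map_sub, sub_eq_zero] at this

lemma mon_congr (n : ℕ) (K : Type*) [Field K] (hn : 1 ≤ n) (m m' : Fin (n + 1) →₀ ℕ)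
    (h : Phi n K n (monomial m 1) = Phi n K n (monomial m' 1)) :
    Ideal.Quotient.mk (IX n K) (monomial m 1) = Ideal.Quotient.mk (IX n K) (monomial m' 1) := by
  have one : (1 : MvPolynomial (Fin (n + 1)) K) = yv n K 0 ^ 0 * yv n K 1 ^ 0 := by simp
  rcases mon_NF n K m with e | ⟨q, r, p, hr, e⟩ <;>
    rcases mon_NF n K m' with e' | ⟨q', r', p', hr', e'⟩
  · rw [e, e']
  · exfalso
    simp only [← map_pow, ← map_mul, ← map_one (Ideal.Quotient.mk (IX n K))] at e e'
    rw [Phi_of_mk _ _ _ _ e, Phi_of_mk _ _ _ _ e', Phi_NF _ _ _ _ _ hr', map_one, one] at h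
    have := mono_inj n K hn _ _ _ _ h
    omega
  · exfalso
    simp only [← map_pow, ← map_mul, ← map_one (Ideal.Quotient.mk (IX n K))] at e e'
    rw [Phi_of_mk _ _ _ _ e, Phi_of_mk _ _ _ _ e', Phi_NF _ _ _ _ _ hr, map_one, one] at h
    have := mono_inj n K hn _ _ _ _ h
    omega
  · simp only [← map_pow, ← map_mul] at e e'
    rw [Phi_of_mk _ _ _ _ e, Phi_of_mk _ _ _ _ e', Phi_NF _ _ _ _ _ hr,
      Phi_NF _ _ _ _ _ hr'] at h
    obtain ⟨h1, h2⟩ := mono_inj n K hn _ _ _ _ h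
    rw [e, e']
    congr 1
    rcases lt_trichotomy q q' with hq | rfl | hq
    · have : n * (q + 1) ≤ n * q' := Nat.mul_le_mul_left n hq
      rw [mul_add] at this
      obtain rfl : r = n := by omega
      obtain rfl : r' = 0 := by omega
      have : q + 1 = q' := Nat.eq_of_mul_eq_mul_left hn (by rw [mul_add]; omega)
      have : p = p' + 1 := Nat.eq_of_mul_eq_mul_left hn (by rw [mul_add]; omega)
      subst_vars
      ring
    · obtain rfl : r = r' := by omega
      obtain rfl : p = p' := Nat.eq_of_mul_eq_mul_left hn (by omega)
      rfl
    · have : n * (q' + 1) ≤ n * q := Nat.mul_le_mul_left n hq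
      rw [mul_add] at this
      obtain rfl : r' = n := by omega
      obtain rfl : r = 0 := by omega
      have : q' + 1 = q := Nat.eq_of_mul_eq_mul_left hn (by rw [mul_add]; omega)
      have : p' = p + 1 := Nat.eq_of_mul_eq_mul_left hn (by rw [mul_add]; omega)
      subst_vars
      ring

open Classical in
lemma ker_le_IX (n : ℕ) (K : Type*) [Field K] (hn : 1 ≤ n) :
    RingHom.ker (Phi n K n) ≤ IX n K := by
  let σ : MvPolynomial (Fin (n + 1)) K →ₗ[K] (MvPolynomial (Fin (n + 1)) K ⧸ IX n K) :=
    (basisMonomials (Fin (n + 1)) K).constr K (fun u =>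
      if h : ∃ m, Phi n K n (monomial m 1) = monomial u 1 then
        Ideal.Quotient.mk (IX n K) (monomial h.choose 1) else 0)
  have hσ : σ ∘ₗ (Phi n K n).toLinearMap = (Ideal.Quotient.mkₐ K (IX n K)).toLinearMap := by
    apply (basisMonomials (Fin (n + 1)) K).ext
    intro m
    rw [coe_basisMonomials]
    obtain ⟨u, hu⟩ := Phi_mon n K hn m
    have hex : ∃ m, Phi n K n (monomial m 1) = monomial u 1 := ⟨m, hu⟩
    have h1 : σ (monomial u 1) = Ideal.Quotient.mk (IX n K) (monomial hex.choose 1) := by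
      have := (basisMonomials (Fin (n + 1)) K).constr_basis K (fun u =>
        if h : ∃ m, Phi n K n (monomial m 1) = monomial u 1 then
        Ideal.Quotient.mk (IX n K) (monomial h.choose 1) else 0) u
      rw [coe_basisMonomials, dif_pos hex] at this
      exact this
    simp only [LinearMap.comp_apply, AlgHom.toLinearMap_apply]
    rw [hu, h1]
    exact mon_congr n K hn _ _ (hex.choose_spec.trans hu.symm)
  intro f hf
  have := LinearMap.congr_fun hσ f
  simp only [LinearMap.comp_apply, AlgHom.toLinearMap_apply] at this
  rw [RingHom.mem_ker] at hf
  rw [hf, map_zero] at this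
  exact Ideal.Quotient.eq_zero_iff_mem.mp this.symm

lemma IX_eq_ker (n : ℕ) (K : Type*) [Field K] (hn : 1 ≤ n) :
    IX n K = RingHom.ker (Phi n K n) :=
  le_antisymm (IX_le_ker n K) (ker_le_IX n K hn)

instance ker_prime (n : ℕ) (K : Type*) [Field K] (k : ℕ) : (RingHom.ker (Phi n K k)).IsPrime :=
  RingHom.ker_isPrime _

lemma ker_lt (n : ℕ) (K : Type*) [Field K] (k : ℕ) (hk : 1 ≤ k) (hkn : k + 1 ≤ n) :
    RingHom.ker (Phi n K k) < RingHom.ker (Phi n K (k + 1)) := by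
  apply lt_of_le_of_ne
  · let ψ : MvPolynomial (Fin (n + 1)) K →ₐ[K] MvPolynomial (Fin (n + 1)) K :=
      aeval (fun i => if (i : ℕ) = k + 1 then yv n K 0 ^ (n - i) * yv n K 1 ^ (i : ℕ) else X i)
    have hψ : ∀ i, i ≤ n → i ≠ k + 1 → ψ (yv n K i) = yv n K i := by
      intro i hi hik
      rw [yv_of_lt n K i (by omega)]
      simp [ψ, hik]
    have hc : ψ.comp (Phi n K k) = Phi n K (k + 1) := by
      apply MvPolynomial.algHom_ext
      intro i
      rw [AlgHom.comp_apply, ← yv_fin]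
      have hi : (i : ℕ) ≤ n := by omega
      rcases Nat.lt_or_ge k i with h | h
      · rw [Phi_yv_gt _ _ _ _ hi h]
        rcases eq_or_ne (i : ℕ) (k + 1) with h' | h'
        · rw [Phi_yv_le _ _ _ _ hi h'.le, yv_fin]
          simp [ψ, h']
        · rw [Phi_yv_gt _ _ _ _ hi (by omega), hψ _ hi h']
      · rw [Phi_yv_le _ _ _ _ hi h, Phi_yv_le _ _ _ _ hi (by omega), map_mul, map_pow, map_pow,
          hψ 0 (by omega) (by omega), hψ 1 (by omega) (by omega)]
    intro f hf
    rw [RingHom.mem_ker] at hf ⊢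
    rw [← hc, AlgHom.comp_apply, hf, map_zero]
  · intro heq
    have h1 := Phi_rel n K (k + 1) (k - 1) k hkn (by omega) le_rfl
    rw [← RingHom.mem_ker, ← heq, RingHom.mem_ker, show k - 1 + 1 = k by omega, map_sub, map_mul,
      map_mul, Phi_yv_gt _ _ _ (k + 1) hkn (by omega), Phi_yv_le _ _ _ k (by omega) le_rfl,
      Phi_yv_le _ _ _ (k - 1) (by omega) (by omega)] at h1
    have h2 := congrArg (eval (fun i : Fin (n + 1) => if (i : ℕ) ≤ 1 then (1 : K) else 0)) h1
    rw [yv_of_lt n K 0 (by omega), yv_of_lt n K 1 (by omega), yv_of_lt n K (k + 1) (by omega)] at h2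
    have : k ≠ 0 := by omega
    simp [this] at h2

/-- the chain of primes -/
noncomputable def kerP (n : ℕ) (K : Type*) [Field K] (k : ℕ) :
    PrimeSpectrum (MvPolynomial (Fin (n + 1)) K) := ⟨RingHom.ker (Phi n K k), ker_prime n K k⟩

lemma height_ge (n : ℕ) (K : Type*) [Field K] (k : ℕ) (hk : k + 1 ≤ n) :
    (k : ℕ∞) ≤ Order.height (kerP n K (k + 1)) := by
  induction k with
  | zero => simp
  | succ k ih =>
    have h1 := ih (by omega)
    have hlt : kerP n K (k + 1) < kerP n K (k + 1 + 1) := ker_lt n K (k + 1) (by omega) (by omega)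
    push_cast
    exact (add_le_add_left h1 1).trans (Order.height_add_one_le hlt)

lemma yv_notMem (n : ℕ) (K : Type*) [Field K] (i : ℕ) (hn : 1 ≤ n) (hi : i ≤ n) :
    yv n K i ∉ RingHom.ker (Phi n K n) := by
  rw [RingHom.mem_ker, Phi_yv_le _ _ _ _ hi hi, yv_of_lt n K 0 (by omega),
    yv_of_lt n K 1 (by omega)]
  exact mul_ne_zero (pow_ne_zero _ (X_ne_zero _)) (pow_ne_zero _ (X_ne_zero _))

/-- the path ideal generators -/
noncomputable def pgen (n : ℕ) (K : Type*) [Field K] (i : ℕ) : MvPolynomial (Fin (n + 1)) K :=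
  yv n K i * yv n K (i + 2) - yv n K (i + 1) * yv n K (i + 1)

open Classical in
lemma height_le (n : ℕ) (K : Type*) [Field K] (hn : 3 ≤ n) :
    Order.height (kerP n K n) ≤ ((n - 1 : ℕ) : ℕ∞) := by
  let s : Finset (MvPolynomial (Fin (n + 1)) K) := (Finset.range (n - 1)).image (pgen n K)
  have hmin : RingHom.ker (Phi n K n) ∈ (Ideal.span (s : Set _)).minimalPrimes := by
    refine ⟨⟨ker_prime n K n, ?_⟩, ?_⟩
    · rw [Ideal.span_le]
      intro f hf
      simp only [s, Finset.coe_image, Set.mem_image, Finset.coe_range, Set.mem_Iio] at hf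
      obtain ⟨i, hi, rfl⟩ := hf
      exact Phi_rel n K n i (i + 1) le_rfl (by omega) (by omega)
    · rintro Q ⟨hQp, hQ⟩ hle
      have hQp : Q.IsPrime := hQp
      rw [← IX_eq_ker n K (by omega), IX_le_iff]
      intro i j hij hj
      refine dom_rel_ne n (fun i => Ideal.Quotient.mk Q (yv n K i)) ?_ ?_ ?_ i j (by omega) hj
      · intro i hi
        have : pgen n K i ∈ Q := hQ (Ideal.subset_span (by
          simp only [s, Finset.coe_image, Set.mem_image, Finset.coe_range, Set.mem_Iio]
          exact ⟨i, by omega, rfl⟩))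
        exact (mem_iff_rel ..).1 this
      · rw [Ne, Ideal.Quotient.eq_zero_iff_mem]
        exact fun h => yv_notMem n K 0 (by omega) (by omega) (hle h)
      · rw [Ne, Ideal.Quotient.eq_zero_iff_mem]
        exact fun h => yv_notMem n K 1 (by omega) (by omega) (hle h)
  have h1 := Ideal.height_le_spanRank_toENat_of_mem_minimalPrimes _ _ hmin
  have h2 : (RingHom.ker (Phi n K n)).height = Order.height (kerP n K n) :=
    PrimeSpectrum.height_eq_orderHeight (kerP n K n)
  rw [← h2]
  refine h1.trans ?_
  have h3 := Submodule.spanRank_span_le_card (R := MvPolynomial (Fin (n + 1)) K)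
    (s : Set (MvPolynomial (Fin (n + 1)) K))
  have h4 : s.card ≤ n - 1 := Finset.card_image_le.trans (by simp)
  have h5 := Cardinal.toENat.monotone' h3
  refine (show _ ≤ _ from h5).trans ?_
  simp
  exact_mod_cast h4

/-- For a connected labeled Hamiltonian graph `G` on `[n]` (i.e. `C_n ⊆ G`),
the only minimal prime of `I_G` is `I_X`; in particular `height I_G = n - 1`. -/
theorem stmt_2 (n : ℕ) (K : Type*) [Field K] (hn : 3 ≤ n)
    (G : SimpleGraph (Fin n)) (hG : G.Connected) (hcyc : cycleG n ≤ G) :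
    (hankelIdeal n K G).minimalPrimes = {IX n K} ∧
      ht (hankelIdeal n K G) = ((n - 1 : ℕ) : ℕ∞) := by
  have hker := IX_eq_ker n K (by omega)
  have hprime : (IX n K).IsPrime := by rw [hker]; infer_instance
  have hle : hankelIdeal n K G ≤ IX n K := by
    apply Ideal.span_mono
    rintro f ⟨i, j, hij, -, rfl⟩
    exact ⟨i, j, hij, by simpa using hij.ne, rfl⟩
  have hmin : ∀ Q : Ideal (MvPolynomial (Fin (n + 1)) K), Q.IsPrime → hankelIdeal n K G ≤ Q →
      IX n K ≤ Q := fun Q hQ h => IX_le_prime n K hn G hcyc Q h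
  constructor
  · ext Q
    rw [Set.mem_singleton_iff]
    constructor
    · rintro ⟨⟨hQ, hQ'⟩, h⟩
      exact le_antisymm (h ⟨hprime, hle⟩ (hmin Q hQ hQ')) (hmin Q hQ hQ')
    · rintro rfl
      exact ⟨⟨hprime, hle⟩, fun Q hQ _ => hmin Q hQ.1 hQ.2⟩
  · apply le_antisymm
    · refine le_trans (iInf₂_le (kerP n K n) ?_) (height_le n K hn)
      exact hle.trans hker.le
    · refine le_iInf₂ fun p hp => ?_
      have h1 := height_ge n K (n - 1) (by omega)
      rw [show n - 1 + 1 = n by omega] at h1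
      refine h1.trans (Order.height_mono ?_)
      exact hker.ge.trans (hmin _ p.2 hp)
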